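/- arXiv:2307.00147 — 2 statements merged into one kernel-verified Lean document; each statement's English description precedes it below -/
import Mathlib

section
/- Let G = (V, E) be a finite simple undirected graph on a nonempty vertex set, let k be a positive natural number, and suppose there exists a vertex ℓ ∈ V such that every nonempty proper subset A ⊊ V with |E(A, V\A)| < k satisfies ℓ ∈ A. Then G is k-edge-connected, i.e., every pair of vertices of G is k-edge-connected in G. -/
open SimpleGraph

/-- `s` and `t` are `k`-edge-connected in `G`: for every set `F` of edges of `G` with
`|F| < k`, `s` and `t` are reachable from one another in the graph obtained from `G`
by deleting the edges of `F`. -/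
def KEdgeConn {V : Type*} (G : SimpleGraph V) (k : ℕ) (s t : V) : Prop :=
  ∀ F : Finset (Sym2 V), ↑F ⊆ G.edgeSet → F.card < k →
    (G.deleteEdges ↑F).Reachable s t

/-- The set of edges of `G` with exactly one endpoint in `S`, i.e. `E(S, V \ S)`. -/
def crossingEdges {V : Type*} (G : SimpleGraph V) (S : Set V) : Set (Sym2 V) :=
  {e | e ∈ G.edgeSet ∧ ∃ x ∈ S, ∃ y ∉ S, e = s(x, y)}

/-- The induced subgraph `G[S]` is `k`-edge-connected: every pair of vertices of `S`
is `k`-edge-connected in `G[S]`. -/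
def IndKConn {V : Type*} (G : SimpleGraph V) (k : ℕ) (S : Set V) : Prop :=
  ∀ s t : S, KEdgeConn (G.induce S) k s t

/-!
If `s` and `ℓ` are disconnected by deleting fewer than `k` edges, then every edge leaving the
component of `s` in the remaining graph was deleted. This component is therefore a side of a cut
with fewer than `k` edges that contains `s` but not `ℓ`, contrary to hypothesis. So every vertex is
`k`-edge-connected to `ℓ`, and `k`-edge-connectedness is symmetric and transitive.
-/

section

variable {V : Type*} {G : SimpleGraph V} {k : ℕ} {s t u : V}

theorem KEdgeConn.symm (h : KEdgeConn G k s t) : KEdgeConn G k t s :=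
  fun F hFG hFk ↦ (h F hFG hFk).symm

theorem KEdgeConn.trans (hst : KEdgeConn G k s t) (htu : KEdgeConn G k t u) :
    KEdgeConn G k s u :=
  fun F hFG hFk ↦ (hst F hFG hFk).trans (htu F hFG hFk)

theorem crossingEdges_deleteEdges (G : SimpleGraph V) (F : Set (Sym2 V)) (A : Set V) :
    crossingEdges (G.deleteEdges F) A = crossingEdges G A \ F := by
  ext e
  simp only [crossingEdges, edgeSet_deleteEdges, Set.mem_sdiff, Set.mem_ofPred_eq]
  tauto

theorem crossingEdges_supp_eq_empty (C : G.ConnectedComponent) :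
    crossingEdges G C.supp = ∅ := by
  rw [Set.eq_empty_iff_forall_notMem]
  rintro _ ⟨hadj, x, hx, y, hy, rfl⟩
  exact hy ((C.mem_supp_congr_adj hadj).mp hx)

theorem kEdgeConn_of_forall_le_encard_crossingEdges
    (h : ∀ A : Set V, s ∈ A → t ∉ A → k ≤ (crossingEdges G A).encard) :
    KEdgeConn G k s t := by
  intro F _ hFk
  by_contra hst
  let C := (G.deleteEdges ↑F).connectedComponentMk s
  have hsC : s ∈ C.supp := rfl
  have htC : t ∉ C.supp := fun ht ↦ hst (ConnectedComponent.exact ht).symm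
  have hCF : crossingEdges G C.supp ⊆ F := by
    rw [← Set.sdiff_eq_empty, ← crossingEdges_deleteEdges, crossingEdges_supp_eq_empty]
  have hkF : (k : ℕ∞) ≤ F.card :=
    calc (k : ℕ∞) ≤ (crossingEdges G C.supp).encard := h C.supp hsC htC
      _ ≤ (F : Set (Sym2 V)).encard := Set.encard_le_encard hCF
      _ = F.card := Set.encard_coe_eq_coe_finsetCard F
  exact hFk.not_ge (Nat.cast_le.mp hkF)

/-- On an infinite vertex set cuts are measured by `Set.encard`, since `Set.ncard` would count an
infinite cut as having no edges. -/
theorem stmt2_general (ℓ : V)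
    (h : ∀ A : Set V, A.Nonempty → A ≠ Set.univ → (crossingEdges G A).encard < k → ℓ ∈ A)
    (s t : V) : KEdgeConn G k s t := by
  have conn_ℓ (v : V) : KEdgeConn G k v ℓ :=
    kEdgeConn_of_forall_le_encard_crossingEdges fun A hvA hℓA ↦
      not_lt.mp fun hlt ↦ hℓA (h A ⟨v, hvA⟩ (ne_of_mem_of_not_mem' (Set.mem_univ ℓ) hℓA).symm hlt)
  exact (conn_ℓ s).trans (conn_ℓ t).symm

end

/-- If some vertex `ℓ` belongs to every nonempty proper `k`-cut of `G`, then `G` is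
`k`-edge-connected. -/
theorem stmt2 {V : Type*} [Fintype V] [Nonempty V] (G : SimpleGraph V) (k : ℕ) (hk : 0 < k)
    (ℓ : V)
    (h : ∀ A : Set V, A.Nonempty → A ≠ Set.univ → (crossingEdges G A).ncard < k → ℓ ∈ A) :
    ∀ s t : V, KEdgeConn G k s t := by
  refine stmt2_general ℓ fun A hA hAV hlt ↦ h A hA hAV ?_
  rwa [← (Set.toFinite _).cast_ncard_eq, Nat.cast_lt] at hlt
end

section
/- Let G = (V, E) be a finite simple undirected graph and let k be a positive natural number. There exists a unique partition {V₁, …, V_z} of V such that, for every i, the induced subgraph G[Vᵢ] is k-edge-connected and there is no strict superset Vᵢ' ⊋ Vᵢ for which G[Vᵢ'] is k-edge-connected. Equivalently, the inclusion-maximal vertex sets S ⊆ V such that G[S] is k-edge-connected form a partition of V (these are the maximal k-edge-connected subgraphs of G). -/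
open SimpleGraph

/-
Deleting fewer than `k` edges of `G[T]` deletes fewer than `k` edges of `G[S]` for every `S ⊆ T`, so
`k`-edge-connectedness of a pair of vertices passes from `G[S]` to `G[T]`. As it is a transitive
relation, the union of any family of sets through `v` that induce `k`-edge-connected subgraphs
induces one again. Hence there is a largest such set through `v`, and a maximal one must equal it.
-/

section EdgeReachable

variable {V W : Type*} {G : SimpleGraph V} {H : SimpleGraph W} {k : ℕ}

lemma kEdgeConn_iff_isEdgeReachable {s t : V} : KEdgeConn G k s t ↔ G.IsEdgeReachable k s t := by
  refine ⟨fun h F hF ↦ ?_, fun h F _ hF ↦ h (by simpa using hF)⟩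
  have hcard : (F ∩ G.edgeSet).encard < k := (Set.encard_mono Set.inter_subset_left).trans_lt hF
  lift F ∩ G.edgeSet to Finset (Sym2 V) using Set.finite_of_encard_le_coe hcard.le with F' hF'
  rw [deleteEdges_eq_inter_edgeSet, ← hF']
  exact h F' (hF' ▸ Set.inter_subset_right) (by simpa using hcard)

lemma isEdgeReachable_map_of_injective (f : G →g H) (hf : Function.Injective f) {s t : V}
    (h : G.IsEdgeReachable k s t) : H.IsEdgeReachable k (f s) (f t) := by
  intro F hF
  have hcard : (Sym2.map f ⁻¹' F).encard ≤ F.encard :=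
    (Sym2.map.injective hf).injOn.encard_image.symm.trans_le
      (Set.encard_mono (Set.image_preimage_subset _ F))
  let f' : G.deleteEdges (Sym2.map f ⁻¹' F) →g H.deleteEdges F :=
    { toFun := f
      map_rel' := fun hab ↦
        have ⟨hadj, hmem⟩ := deleteEdges_adj.1 hab
        deleteEdges_adj.2 ⟨f.map_adj hadj, hmem⟩ }
  exact (h (hcard.trans_lt hF)).map f'

end EdgeReachable

section IndKConn

variable {V : Type*} {G : SimpleGraph V} {k : ℕ}

lemma indKConn_iff_isEdgeConnected {S : Set V} :
    IndKConn G k S ↔ (G.induce S).IsEdgeConnected k :=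
  forall₂_congr fun _ _ ↦ kEdgeConn_iff_isEdgeReachable

lemma indKConn_singleton (v : V) : IndKConn G k {v} :=
  indKConn_iff_isEdgeConnected.2 .of_subsingleton

lemma IndKConn.isEdgeReachable_of_subset {S T : Set V} (hS : IndKConn G k S) (hST : S ⊆ T)
    {s t : V} (hs : s ∈ S) (ht : t ∈ S) :
    (G.induce T).IsEdgeReachable k ⟨s, hST hs⟩ ⟨t, hST ht⟩ :=
  isEdgeReachable_map_of_injective (G.induceHomOfLE hST).toHom (G.induceHomOfLE hST).injective
    (indKConn_iff_isEdgeConnected.1 hS ⟨s, hs⟩ ⟨t, ht⟩)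

lemma indKConn_sUnion (v : V) {𝒮 : Set (Set V)} (hv : ∀ S ∈ 𝒮, v ∈ S)
    (h𝒮 : ∀ S ∈ 𝒮, IndKConn G k S) : IndKConn G k (⋃₀ 𝒮) := by
  rw [indKConn_iff_isEdgeConnected]
  rintro ⟨s, S, hS, hs⟩ ⟨t, T, hT, ht⟩
  have hsv := (h𝒮 S hS).isEdgeReachable_of_subset (Set.subset_sUnion_of_mem hS) hs (hv S hS)
  have hvt := (h𝒮 T hT).isEdgeReachable_of_subset (Set.subset_sUnion_of_mem hT) (hv T hT) ht
  exact hsv.trans hvt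

end IndKConn

/-- The vertex set of the maximal `k`-edge-connected subgraph of `G` through `v`, encoded as the
union of all sets containing `v` that induce a `k`-edge-connected subgraph. This can be smaller than
the set of vertices `k`-edge-connected to `v` in `G`. -/
def kEdgeConnComponent {V : Type*} (G : SimpleGraph V) (k : ℕ) (v : V) : Set V :=
  ⋃₀ {S | v ∈ S ∧ IndKConn G k S}

lemma isGreatest_kEdgeConnComponent {V : Type*} (G : SimpleGraph V) (k : ℕ) (v : V) :
    IsGreatest {S | v ∈ S ∧ IndKConn G k S} (kEdgeConnComponent G k v) where
  left := ⟨⟨{v}, ⟨rfl, indKConn_singleton v⟩, rfl⟩,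
    indKConn_sUnion v (fun _ hS ↦ hS.1) fun _ hS ↦ hS.2⟩
  right _ hS := Set.subset_sUnion_of_mem hS

theorem stmt6_general {V : Type*} (G : SimpleGraph V) (k : ℕ) :
    ∀ v : V, ∃! S : Set V,
      (IndKConn G k S ∧ ∀ S' : Set V, S ⊆ S' → IndKConn G k S' → S' = S) ∧ v ∈ S := by
  intro v
  obtain ⟨⟨hv, hconn⟩, hgreatest⟩ := isGreatest_kEdgeConnComponent G k v
  refine ⟨kEdgeConnComponent G k v, ⟨⟨hconn, fun S hle hS ↦ ?_⟩, hv⟩, ?_⟩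
  · exact (hgreatest ⟨hle hv, hS⟩).antisymm hle
  · rintro S ⟨⟨hS, hmax⟩, hvS⟩
    exact (hmax _ (hgreatest ⟨hvS, hS⟩) hconn).symm

/-- The inclusion-maximal vertex sets `S` such that `G[S]` is `k`-edge-connected form a
partition of `V`: every vertex belongs to exactly one such set (the maximal
`k`-edge-connected subgraphs of `G`). -/
theorem stmt6 {V : Type*} [Fintype V] (G : SimpleGraph V) (k : ℕ) (hk : 0 < k) :
    ∀ v : V, ∃! S : Set V,
      (IndKConn G k S ∧ ∀ S' : Set V, S ⊆ S' → IndKConn G k S' → S' = S) ∧ v ∈ S :=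
  stmt6_general G k
end
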